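/- arXiv:2604.07718 — 2 statements merged into one kernel-verified Lean document; each statement's English description precedes it below -/
import Mathlib

section
/- Fix integers p, k ≥ 1. Let c ∈ ℝ^p, let Φ₀ ∈ ℝ^{p×p} be invertible, let Φ̄₁ ∈ ℝ^{p×kp} have rank p, and let ρ be an admissible density on ℝ^p satisfying the local-maximum condition. Let c̃ ∈ ℝ^p, let Φ̃₀ ∈ ℝ^{p×p} be invertible, and let Φ̃₁ ∈ ℝ^{p×kp}. Then there exists an admissible density ρ̃ on ℝ^p such that ρ(Φ₀ξ − c − Φ̄₁ξ̄)·|det Φ₀| = ρ̃(Φ̃₀ξ − c̃ − Φ̃₁ξ̄)·|det Φ̃₀| for Lebesgue-almost every (ξ, ξ̄) ∈ ℝ^p × ℝ^{kp}, if and only if there exists an orthogonal matrix Q ∈ O(p) such that c̃ = Qc, Φ̃₀ = QΦ₀ and Φ̃₁ = QΦ̄₁. -/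
open MeasureTheory Matrix

noncomputable section

/-- `E n` is Euclidean space `ℝ^n`. -/
abbrev E (n : ℕ) : Type := EuclideanSpace ℝ (Fin n)

/-- Action of a matrix on a Euclidean vector. -/
def mulVecE {m n : ℕ} (A : Matrix (Fin m) (Fin n) ℝ) (x : E n) : E m := WithLp.toLp 2 (A.mulVec x)

/-- An admissible density on `ℝ^G`: continuously differentiable, everywhere strictly positive,
integrating to one, with zero mean and identity covariance (stated componentwise). -/
def AdmissibleDensity {G : ℕ} (ρ : E G → ℝ) : Prop :=
  ContDiff ℝ 1 ρ ∧ (∀ u, 0 < ρ u) ∧ ((∫ u, ρ u) = 1) ∧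
    (∀ i, (∫ u : E G, u i * ρ u) = 0) ∧
    (∀ i j, (∫ u : E G, u i * u j * ρ u) = if i = j then 1 else 0)

/-- The local-maximum condition: `ρ` has a local maximum at some `u₀`, is twice continuously
differentiable in a neighbourhood of `u₀`, and has negative definite Hessian there. -/
def LocalMaxCondition {G : ℕ} (ρ : E G → ℝ) : Prop :=
  ∃ u₀ : E G, IsLocalMax ρ u₀ ∧ ContDiffAt ℝ 2 ρ u₀ ∧
    ∀ v : E G, v ≠ 0 → iteratedFDeriv ℝ 2 ρ u₀ ![v, v] < 0


theorem mulVecE_apply {m n : ℕ} (A : Matrix (Fin m) (Fin n) ℝ) (x : E n) (i : Fin m) :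
    mulVecE A x i = ∑ j, A i j * x j := rfl

theorem mulVecE_mul {m n l : ℕ} (A : Matrix (Fin m) (Fin n) ℝ) (B : Matrix (Fin n) (Fin l) ℝ)
    (x : E l) : mulVecE (A * B) x = mulVecE A (mulVecE B x) := by
  simp [mulVecE, Matrix.mulVec_mulVec]

theorem mulVecE_one {n : ℕ} (x : E n) : mulVecE (1 : Matrix (Fin n) (Fin n) ℝ) x = x := by
  simp [mulVecE]

theorem mulVecE_add {m n : ℕ} (A : Matrix (Fin m) (Fin n) ℝ) (x y : E n) :
    mulVecE A (x + y) = mulVecE A x + mulVecE A y := by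
  simp [mulVecE, Matrix.mulVec_add]

theorem mulVecE_sub {m n : ℕ} (A : Matrix (Fin m) (Fin n) ℝ) (x y : E n) :
    mulVecE A (x - y) = mulVecE A x - mulVecE A y := by
  simp [mulVecE, Matrix.mulVec_sub]

theorem mulVecE_zero {m n : ℕ} (A : Matrix (Fin m) (Fin n) ℝ) :
    mulVecE A (0 : E n) = 0 := by
  simp [mulVecE]

theorem sub_mulVecE {m n : ℕ} (A B : Matrix (Fin m) (Fin n) ℝ) (x : E n) :
    mulVecE (A - B) x = mulVecE A x - mulVecE B x := by
  simp [mulVecE, Matrix.sub_mulVec]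

theorem mulVecE_eq_lin {m n : ℕ} (A : Matrix (Fin m) (Fin n) ℝ) :
    (mulVecE A) = LinearMap.toContinuousLinearMap (Matrix.toEuclideanLin A) := by
  ext x i
  simp [mulVecE, Matrix.toEuclideanLin]

theorem contDiff_mulVecE {m n : ℕ} (A : Matrix (Fin m) (Fin n) ℝ) :
    ContDiff ℝ 1 (mulVecE A) := by
  rw [mulVecE_eq_lin]
  exact ContinuousLinearMap.contDiff _

theorem continuous_mulVecE {m n : ℕ} (A : Matrix (Fin m) (Fin n) ℝ) :
    Continuous (mulVecE A) := (contDiff_mulVecE A).continuous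

theorem eq_zero_of_mulVecE {m n : ℕ} (A : Matrix (Fin m) (Fin n) ℝ)
    (h : ∀ x, mulVecE A x = 0) : A = 0 := by
  ext i j
  have := congrArg (fun v : E m => v i) (h (EuclideanSpace.single j 1))
  simpa [mulVecE_apply, Finset.sum_ite_eq] using this

/-- change of variables -/
theorem integral_affine {n : ℕ} (A : Matrix (Fin n) (Fin n) ℝ) (hA : A.det ≠ 0) (d : E n)
    (g : E n → ℝ) : (∫ u, g u) = |A.det| * ∫ v, g (mulVecE A v + d) := by
  have hdet : LinearMap.det (Matrix.toEuclideanLin A) = A.det := by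
    rw [Matrix.toEuclideanLin_eq_toLin_orthonormal, LinearMap.det_toLin]
  have hmap := Measure.map_linearMap_addHaar_eq_smul_addHaar (volume : Measure (E n))
    (f := Matrix.toEuclideanLin A) (by rw [hdet]; exact hA)
  rw [hdet] at hmap
  have hemb : MeasurableEmbedding (mulVecE A) := by
    apply Continuous.measurableEmbedding (continuous_mulVecE A)
    intro x y hxy
    have h := congrArg (mulVecE A⁻¹) hxy
    rwa [← mulVecE_mul, ← mulVecE_mul, Matrix.nonsing_inv_mul _ (isUnit_iff_ne_zero.mpr hA),
      mulVecE_one, mulVecE_one] at h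
  have h1 : (∫ v, g (mulVecE A v + d)) = ∫ u, g (u + d) ∂(Measure.map (mulVecE A) volume) :=
    (hemb.integral_map (fun u => g (u + d))).symm
  have h2 : (mulVecE A) = (Matrix.toEuclideanLin A : E n → E n) := by
    rw [mulVecE_eq_lin]; rfl
  rw [h1, h2, hmap, integral_smul_measure, integral_add_right_eq_self g d]
  have : |A.det| ≠ 0 := abs_ne_zero.mpr hA
  rw [ENNReal.toReal_ofReal (by positivity), abs_inv, smul_eq_mul, mul_inv_cancel_left₀ this]

section moments
variable {n : ℕ} {ρ : E n → ℝ}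

theorem AdmissibleDensity.integrable (h : AdmissibleDensity ρ) : Integrable ρ := by
  by_contra hc
  have := h.2.2.1
  rw [integral_undef hc] at this
  exact zero_ne_one this

theorem AdmissibleDensity.integrable2 (h : AdmissibleDensity ρ) (i j : Fin n) :
    Integrable (fun u : E n => u i * u j * ρ u) := by
  have key : ∀ i, Integrable (fun u : E n => u i * u i * ρ u) := by
    intro i
    by_contra hc
    have := h.2.2.2.2 i i
    rw [integral_undef hc] at this
    simp at this
  have hcont := h.1.continuous
  refine ((key i).add (key j)).mono' (by fun_prop) (Filter.Eventually.of_forall fun u => ?_)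
  have hu := h.2.1 u
  rw [Real.norm_eq_abs, abs_mul, abs_of_pos hu]
  simp only [Pi.add_apply]
  rw [← add_mul]
  gcongr
  rw [abs_le]
  constructor <;> nlinarith [sq_nonneg (u i + u j), sq_nonneg (u i - u j), sq_nonneg (u i),
    sq_nonneg (u j)]

theorem AdmissibleDensity.integrable1 (h : AdmissibleDensity ρ) (i : Fin n) :
    Integrable (fun u : E n => u i * ρ u) := by
  have hcont := h.1.continuous
  refine (h.integrable.add (h.integrable2 i i)).mono' (by fun_prop)
    (Filter.Eventually.of_forall fun u => ?_)
  have hu := h.2.1 u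
  rw [Real.norm_eq_abs, abs_mul, abs_of_pos hu]
  simp only [Pi.add_apply]
  rw [← one_add_mul]
  gcongr
  rw [abs_le]
  constructor <;> nlinarith [sq_nonneg (u i + 1), sq_nonneg (u i - 1), sq_nonneg (u i)]

theorem AdmissibleDensity.moment1 (h : AdmissibleDensity ρ) (A : Matrix (Fin n) (Fin n) ℝ)
    (d : E n) (i : Fin n) : (∫ u : E n, (mulVecE A u + d) i * ρ u) = d i := by
  have e : (fun u : E n => (mulVecE A u + d) i * ρ u)
      = fun u => (∑ j, A i j * (u j * ρ u)) + d i * ρ u := by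
    funext u
    simp only [PiLp.add_apply, mulVecE_apply, add_mul, Finset.sum_mul, mul_assoc]
  rw [e, integral_add (integrable_finsetSum _ fun j _ => (h.integrable1 j).const_mul _)
    (h.integrable.const_mul _),
    integral_finsetSum _ (fun j _ => (h.integrable1 j).const_mul _)]
  simp [integral_const_mul, h.2.2.1, h.2.2.2.1]

theorem AdmissibleDensity.moment2 (h : AdmissibleDensity ρ) (A : Matrix (Fin n) (Fin n) ℝ)
    (i j : Fin n) : (∫ u : E n, mulVecE A u i * mulVecE A u j * ρ u) = (A * Aᵀ) i j := by
  have e : (fun u : E n => mulVecE A u i * mulVecE A u j * ρ u)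
      = fun u => ∑ k, ∑ l, (A i k * A j l) * (u k * u l * ρ u) := by
    funext u
    rw [mulVecE_apply, mulVecE_apply, Finset.sum_mul_sum]
    simp only [Finset.sum_mul]
    refine Finset.sum_congr rfl fun k _ => Finset.sum_congr rfl fun l _ => ?_
    ring
  have hi : ∀ k l, Integrable (fun u : E n => (A i k * A j l) * (u k * u l * ρ u)) :=
    fun k l => (h.integrable2 k l).const_mul _
  rw [e, integral_finsetSum _ (fun k _ => integrable_finsetSum _ fun l _ => hi k l)]
  simp_rw [integral_finsetSum _ (fun l _ => hi _ l), integral_const_mul, h.2.2.2.2]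
  simp [Matrix.mul_apply]

/-- An admissible density has no nonzero period. -/
theorem AdmissibleDensity.no_period (h : AdmissibleDensity ρ) (v : E n)
    (hv : ∀ u, ρ (u + v) = ρ u) : v = 0 := by
  ext i
  have h1 := integral_add_right_eq_self (μ := (volume : Measure (E n))) (fun u : E n => u i * ρ u) v
  have h2 := h.moment1 1 v i
  simp only [hv] at h1
  simp only [mulVecE_one] at h2
  rw [h2, h.2.2.2.1] at h1
  simpa using h1

end moments

/-- **Identification of the linear SVAR** (Theorem 1 / `thm:linSVAR`): two parametrisations
`(c, Φ₀, Φ̄₁, ρ)` and `(c̃, Φ̃₀, Φ̃₁, ρ̃)` of the linear SVAR are observationally equivalent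
for some admissible density `ρ̃` if and only if they differ by an orthogonal matrix `Q`. -/
theorem linear_svar_identification
    (p k : ℕ) (hp : 1 ≤ p) (hk : 1 ≤ k)
    (c : E p) (Φ₀ : Matrix (Fin p) (Fin p) ℝ) (hΦ₀ : Φ₀.det ≠ 0)
    (Φ₁ : Matrix (Fin p) (Fin (k * p)) ℝ) (hΦ₁ : Φ₁.rank = p)
    (ρ : E p → ℝ) (hρ : AdmissibleDensity ρ) (hρmax : LocalMaxCondition ρ)
    (ct : E p) (Φt₀ : Matrix (Fin p) (Fin p) ℝ) (hΦt₀ : Φt₀.det ≠ 0)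
    (Φt₁ : Matrix (Fin p) (Fin (k * p)) ℝ) :
    (∃ ρt : E p → ℝ, AdmissibleDensity ρt ∧
        ∀ᵐ w : E p × E (k * p),
          ρ (mulVecE Φ₀ w.1 - c - mulVecE Φ₁ w.2) * |Φ₀.det|
            = ρt (mulVecE Φt₀ w.1 - ct - mulVecE Φt₁ w.2) * |Φt₀.det|)
      ↔ ∃ Q : Matrix (Fin p) (Fin p) ℝ, Q * Qᵀ = 1 ∧
          ct = mulVecE Q c ∧ Φt₀ = Q * Φ₀ ∧ Φt₁ = Q * Φ₁ := by
  constructor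
  · rintro ⟨ρt, hρt, hae⟩
    have hall : ∀ w : E p × E (k * p),
          ρ (mulVecE Φ₀ w.1 - c - mulVecE Φ₁ w.2) * |Φ₀.det|
            = ρt (mulVecE Φt₀ w.1 - ct - mulVecE Φt₁ w.2) * |Φt₀.det| := by
      have c1 := hρ.1.continuous
      have c2 := hρt.1.continuous
      have a0 := continuous_mulVecE Φ₀
      have a1 := continuous_mulVecE Φ₁
      have b0 := continuous_mulVecE Φt₀
      have b1 := continuous_mulVecE Φt₁
      exact fun w => congrFun ((Continuous.ae_eq_iff_eq volume (by fun_prop) (by fun_prop)).mp hae) w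
    have hu0 := isUnit_iff_ne_zero.mpr hΦ₀
    set Q := Φt₀ * Φ₀⁻¹ with hQ
    have hQΦ : Q * Φ₀ = Φt₀ := by
      rw [hQ, Matrix.mul_assoc, Matrix.nonsing_inv_mul _ hu0, Matrix.mul_one]
    have hQdet : Q.det ≠ 0 := by
      intro h0
      apply hΦt₀
      rw [← hQΦ, Matrix.det_mul, h0, zero_mul]
    have huQ := isUnit_iff_ne_zero.mpr hQdet
    have habs : |Φt₀.det| = |Q.det| * |Φ₀.det| := by
      rw [← hQΦ, Matrix.det_mul, abs_mul]
    have hkey : ∀ (u : E p) (x : E (k * p)),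
        ρ u = ρt (mulVecE Q u + (mulVecE Q c - ct) + mulVecE (Q * Φ₁ - Φt₁) x) * |Q.det| := by
      intro u x
      have h := hall (mulVecE Φ₀⁻¹ (u + c + mulVecE Φ₁ x), x)
      simp only [habs, ← mul_assoc] at h
      have h' := mul_right_cancel₀ (abs_ne_zero.mpr hΦ₀) h
      rw [← mulVecE_mul, ← mulVecE_mul, Matrix.mul_nonsing_inv _ hu0, mulVecE_one, ← hQ] at h'
      have e1 : u + c + mulVecE Φ₁ x - c - mulVecE Φ₁ x = u := by abel
      rw [e1] at h'
      rw [h']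
      congr 2
      rw [sub_mulVecE, mulVecE_mul Q Φ₁, mulVecE_add Q, mulVecE_add Q]
      abel
    have hD : Q * Φ₁ - Φt₁ = 0 := by
      apply eq_zero_of_mulVecE
      intro x
      have hv := hρ.no_period (mulVecE Q⁻¹ (mulVecE (Q * Φ₁ - Φt₁) x)) (by
        intro u
        rw [hkey u x, hkey _ 0, mulVecE_zero, mulVecE_add, ← mulVecE_mul Q,
          Matrix.mul_nonsing_inv _ huQ, mulVecE_one]
        congr 2
        abel)
      have := congrArg (mulVecE Q) hv
      rwa [← mulVecE_mul Q, Matrix.mul_nonsing_inv _ huQ, mulVecE_one, mulVecE_zero] at this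
    have hk2 : ∀ u : E p, ρ u = ρt (mulVecE Q u + (mulVecE Q c - ct)) * |Q.det| := by
      intro u
      have := hkey u 0
      rwa [mulVecE_zero, add_zero] at this
    have hd : mulVecE Q c - ct = 0 := by
      ext i
      have h1 := hρt.2.2.2.1 i
      rw [integral_affine Q hQdet (mulVecE Q c - ct), ← integral_const_mul] at h1
      have h2 := hρ.moment1 Q (mulVecE Q c - ct) i
      rw [← h2, PiLp.zero_apply, ← h1]
      refine integral_congr_ae (Filter.Eventually.of_forall fun u => ?_)
      simp only [hk2 u]
      ring
    refine ⟨Q, ?_, (sub_eq_zero.mp hd).symm, hQΦ.symm, (sub_eq_zero.mp hD).symm⟩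
    ext i j
    have h1 := hρt.2.2.2.2 i j
    rw [integral_affine Q hQdet 0, ← integral_const_mul] at h1
    rw [← hρ.moment2 Q i j, Matrix.one_apply, ← h1]
    refine integral_congr_ae (Filter.Eventually.of_forall fun u => ?_)
    simp only [hk2 u, hd, add_zero]
    ring
  · rintro ⟨Q, hQ, rfl, rfl, rfl⟩
    have hQ' : Qᵀ * Q = 1 := mul_eq_one_comm.mp hQ
    have hdet : |Q.det| = 1 := by
      have h := congrArg Matrix.det hQ
      rw [Matrix.det_mul, Matrix.det_transpose, Matrix.det_one, ← abs_mul_abs_self] at h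
      nlinarith [abs_nonneg Q.det]
    have hQdet : Q.det ≠ 0 := by
      intro h0
      simp [h0] at hdet
    have hinv : ∀ u : E p, mulVecE Qᵀ (mulVecE Q u) = u := by
      intro u
      rw [← mulVecE_mul, hQ', mulVecE_one]
    have hcv : ∀ g : E p → ℝ, (∫ u, g u) = ∫ v, g (mulVecE Q v) := by
      intro g
      rw [integral_affine Q hQdet 0, hdet, one_mul]
      simp only [add_zero]
    refine ⟨fun u => ρ (mulVecE Qᵀ u), ⟨hρ.1.comp (contDiff_mulVecE _), fun u => hρ.2.1 _, ?_, ?_,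
      ?_⟩, Filter.Eventually.of_forall fun w => ?_⟩
    · rw [hcv]
      simp only [hinv, hρ.2.2.1]
    · intro i
      rw [hcv]
      simp only [hinv]
      simpa using hρ.moment1 Q 0 i
    · intro i j
      rw [hcv]
      simp only [hinv]
      rw [hρ.moment2 Q i j, hQ, Matrix.one_apply]
    · simp only [mulVecE_mul, ← mulVecE_sub, hinv]
      rw [Matrix.det_mul, abs_mul, hdet, one_mul]
end
end

section
/- Fix integers p, k ≥ 1. Suppose: f₀ : ℝ^p → ℝ^p is a locally Lipschitz bijection with f₀(0) = 0, whose inverse f₀⁻¹ is locally Lipschitz and such that f₀ is differentiable with det Df₀(z) ≠ 0 at Lebesgue-almost every z ∈ ℝ^p; f̄₁ : ℝ^{kp} → ℝ^p is locally Lipschitz, surjective, and differentiable with rank Df̄₁(z̄) = p at almost every z̄ ∈ ℝ^{kp}; ρ is an admissible density on ℝ^p satisfying the local-maximum condition. Let f̃₀ : ℝ^p → ℝ^p be any locally Lipschitz bijection with f̃₀(0) = 0 and det Df̃₀(z) ≠ 0 at almost every z, and let f̃₁ : ℝ^{kp} → ℝ^p be any locally Lipschitz function. Then there exists an admissible density ρ̃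 on ℝ^p such that ρ(f₀(ξ) − f̄₁(ξ̄))·|det Df₀(ξ)| = ρ̃(f̃₀(ξ) − f̃₁(ξ̄))·|det Df̃₀(ξ)| for Lebesgue-almost every (ξ, ξ̄) ∈ ℝ^p × ℝ^{kp}, if and only if there exists an orthogonal matrix Q ∈ O(p) such that f̃₀(z) = Q f₀(z) for all z ∈ ℝ^p and f̃₁(z̄) = Q f̄₁(z̄) for all z̄ ∈ ℝ^{kp}. -/
open MeasureTheory Matrix

noncomputable section

namespace SVAR

lemma int0 {p : ℕ} {ρ : E p → ℝ} (h : AdmissibleDensity ρ) : Integrable ρ := by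
  by_contra hh
  have := h.2.2.1
  rw [integral_undef hh] at this
  norm_num at this

lemma int2d {p : ℕ} {ρ : E p → ℝ} (h : AdmissibleDensity ρ) (i : Fin p) :
    Integrable (fun u : E p => u i * u i * ρ u) := by
  by_contra hh
  have := h.2.2.2.2 i i
  rw [integral_undef hh] at this
  norm_num at this

lemma int2 {p : ℕ} {ρ : E p → ℝ} (h : AdmissibleDensity ρ) (i j : Fin p) :
    Integrable (fun u : E p => u i * u j * ρ u) := by
  have hc := h.1.continuous
  refine ((int2d h i).add (int2d h j)).mono' (by fun_prop) (Filter.Eventually.of_forall fun u => ?_)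
  have hp := h.2.1 u
  rw [Real.norm_eq_abs, abs_mul, abs_of_pos hp]
  simp only [Pi.add_apply]
  rw [← add_mul]
  refine mul_le_mul_of_nonneg_right ?_ hp.le
  rw [abs_le]; constructor <;> nlinarith [sq_nonneg (u i - u j), sq_nonneg (u i + u j), sq_nonneg (u i), sq_nonneg (u j)]

lemma int1 {p : ℕ} {ρ : E p → ℝ} (h : AdmissibleDensity ρ) (i : Fin p) :
    Integrable (fun u : E p => u i * ρ u) := by
  have hc := h.1.continuous
  refine ((int2d h i).add (int0 h)).mono' (by fun_prop) (Filter.Eventually.of_forall fun u => ?_)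
  have hp := h.2.1 u
  rw [Real.norm_eq_abs, abs_mul, abs_of_pos hp]
  simp only [Pi.add_apply]
  have : |u i| ≤ u i * u i + 1 := by
    rw [abs_le]; constructor <;> nlinarith [sq_nonneg (u i - 1), sq_nonneg (u i + 1)]
  nlinarith

/-- No quasi-periods. -/
lemma nonper {p : ℕ} {ρ : E p → ℝ} (h : AdmissibleDensity ρ) (e : E p) 
    (hk : ∀ u, ρ (u + e) = ρ u) : e = 0 := by
  ext i
  have h1 : (∫ u : E p, (u + e) i * ρ (u + e)) = ∫ u : E p, u i * ρ u :=
    integral_add_right_eq_self (fun u : E p => u i * ρ u) e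
  have h2 : (fun u : E p => (u + e) i * ρ (u + e)) = fun u : E p => u i * ρ u + e i * ρ u := by
    funext u; rw [hk]; simp; ring
  rw [h2, integral_add (int1 h i) ((int0 h).const_mul _), integral_const_mul, h.2.2.1] at h1
  simpa using h1

lemma coordL {p : ℕ} (L : E p →L[ℝ] E p) (u : E p) (i : Fin p) :
    L u i = ∑ j, L (EuclideanSpace.single j 1) i * u j := by
  have : u = ∑ j, u j • EuclideanSpace.single j (1:ℝ) := by
    ext k; simp [Finset.sum_apply, Pi.single_apply]
  conv_lhs => rw [this]
  simp [mul_comm]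

lemma mom1 {p : ℕ} {ρ : E p → ℝ} (h : AdmissibleDensity ρ) (L : E p →L[ℝ] E p) (i : Fin p) :
    Integrable (fun u : E p => L u i * ρ u) ∧ (∫ u : E p, L u i * ρ u) = 0 := by
  have : (fun u : E p => L u i * ρ u) =
      fun u => ∑ j, L (EuclideanSpace.single j 1) i * (u j * ρ u) := by
    funext u; rw [coordL, Finset.sum_mul]; simp [mul_assoc]
  rw [this]
  constructor
  · exact integrable_finsetSum _ fun j _ => (int1 h j).const_mul _
  rw [integral_finsetSum _ fun j _ => (int1 h j).const_mul _]
  simp [integral_const_mul, h.2.2.2.1]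

lemma mom2 {p : ℕ} {ρ : E p → ℝ} (h : AdmissibleDensity ρ) (L : E p →L[ℝ] E p) (i j : Fin p) :
    Integrable (fun u : E p => L u i * L u j * ρ u) ∧ (∫ u : E p, L u i * L u j * ρ u) =
      ∑ k, L (EuclideanSpace.single k 1) i * L (EuclideanSpace.single k 1) j := by
  have : (fun u : E p => L u i * L u j * ρ u) =
      fun u => ∑ k, ∑ l, L (EuclideanSpace.single k 1) i * L (EuclideanSpace.single l 1) j
        * (u k * u l * ρ u) := by
    funext u; rw [coordL L u i, coordL L u j, Finset.sum_mul_sum, Finset.sum_mul]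
    refine Finset.sum_congr rfl fun k _ => ?_
    rw [Finset.sum_mul]
    refine Finset.sum_congr rfl fun l _ => ?_
    ring
  rw [this]
  constructor
  · exact integrable_finsetSum _ fun k _ => integrable_finsetSum _ fun l _ => (int2 h k l).const_mul _
  rw [integral_finsetSum _ fun k _ => integrable_finsetSum _ fun l _ => (int2 h k l).const_mul _]
  refine Finset.sum_congr rfl fun k _ => ?_
  rw [integral_finsetSum _ fun l _ => (int2 h k l).const_mul _]
  simp [integral_const_mul, h.2.2.2.2]

lemma cov {p : ℕ} (L : E p →L[ℝ] E p) (hL : Function.Bijective L) (d : E p) (F : E p → ℝ) :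
    (∫ v, F v) = |L.det| * ∫ u, F (L u - d) := by
  have hinj : Set.InjOn (fun u => L u - d) Set.univ := fun a _ b _ hab => by
    simp only [sub_left_inj] at hab; exact hL.1 hab
  have := integral_image_eq_integral_abs_det_fderiv_smul (volume : Measure (E p)) MeasurableSet.univ
    (f := fun u => L u - d) (f' := fun _ => L)
    (fun x _ => (L.hasFDerivAt.sub_const d).hasFDerivWithinAt) hinj F
  have hs : (fun u => L u - d) '' Set.univ = Set.univ := by
    rw [Set.image_univ, Set.range_eq_univ]
    intro y
    obtain ⟨x, hx⟩ := hL.2 (y + d)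
    exact ⟨x, by simp [hx]⟩
  rw [hs] at this
  simpa [integral_const_mul] using this

/-- final moment argument -/
lemma final_mom {p : ℕ} {ρ ρt : E p → ℝ} (h : AdmissibleDensity ρ) (ht : AdmissibleDensity ρt)
    (L : E p →L[ℝ] E p) (hL : Function.Bijective L) (d : E p) (m : ℝ)
    (hm : ∀ u, ρt (L u - d) = m * ρ u) :
    d = 0 ∧ ∀ i j, ∑ k, L (EuclideanSpace.single k 1) i * L (EuclideanSpace.single k 1) j
      = if i = j then 1 else 0 := by
  have h0 := cov L hL d ρt
  simp only [hm, integral_const_mul, h.2.2.1, ht.2.2.1] at h0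
  have hd : d = 0 := by
    ext i
    have h1 := cov L hL d (fun v => v i * ρt v)
    have h2 : (fun u : E p => (L u - d) i * ρt (L u - d)) =
      fun u => m * (L u i * ρ u - d i * ρ u) := by
      funext u; rw [hm]; simp; ring
    simp only [h2] at h1
    rw [integral_const_mul, integral_sub (mom1 h L i).1 ((int0 h).const_mul _), integral_const_mul,
      (mom1 h L i).2, h.2.2.1, ht.2.2.2.1 i] at h1
    simp only [PiLp.zero_apply]
    linear_combination h1 + d i * h0
  refine ⟨hd, fun i j => ?_⟩
  subst hd
  have h1 := cov L hL 0 (fun v => v i * v j * ρt v)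
  have h2 : (fun u : E p => (L u - 0) i * (L u - 0) j * ρt (L u - 0)) =
      fun u => m * (L u i * L u j * ρ u) := by
    funext u; rw [hm]; simp; ring
  simp only [h2] at h1
  rw [integral_const_mul, (mom2 h L i j).2, ht.2.2.2.2 i j] at h1
  rw [h1]
  linear_combination (∑ k, L (EuclideanSpace.single k 1) i * L (EuclideanSpace.single k 1) j) * h0

lemma mulVecE_single {p : ℕ} (Q : Matrix (Fin p) (Fin p) ℝ) (i k : Fin p) :
    Matrix.toEuclideanCLM (𝕜 := ℝ) Q (EuclideanSpace.single k 1) i = Q i k := by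
  simp [EuclideanSpace.single]

lemma mulVecE_eq {p : ℕ} (Q : Matrix (Fin p) (Fin p) ℝ) (u : E p) :
    mulVecE Q u = Matrix.toEuclideanCLM (𝕜 := ℝ) Q u := by
  ext i; simp [mulVecE]

lemma clm_mul {p : ℕ} (Q R : Matrix (Fin p) (Fin p) ℝ) (u : E p) :
    Matrix.toEuclideanCLM (𝕜 := ℝ) (Q * R) u =
      Matrix.toEuclideanCLM (𝕜 := ℝ) Q (Matrix.toEuclideanCLM (𝕜 := ℝ) R u) := by
  rw [map_mul]; rfl

/-- the easy direction -/
lemma easy {p : ℕ} {ρ : E p → ℝ} (h : AdmissibleDensity ρ) (Q : Matrix (Fin p) (Fin p) ℝ)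
    (hQ : Q * Qᵀ = 1) :
    |(Matrix.toEuclideanCLM (𝕜 := ℝ) Q : E p →L[ℝ] E p).det| = 1 ∧
    ∃ ρt, AdmissibleDensity ρt ∧ ∀ u, ρt (mulVecE Q u) = ρ u := by
  have hQ' : Qᵀ * Q = 1 := mul_eq_one_comm.mp hQ
  set L : E p →L[ℝ] E p := Matrix.toEuclideanCLM (𝕜 := ℝ) Q with hLdef
  set L' : E p →L[ℝ] E p := Matrix.toEuclideanCLM (𝕜 := ℝ) Qᵀ with hLdef'
  have h1 : ∀ u, L (L' u) = u := fun u => by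
    rw [hLdef, hLdef', ← clm_mul, hQ]; simp
  have h2 : ∀ u, L' (L u) = u := fun u => by
    rw [hLdef, hLdef', ← clm_mul, hQ']; simp
  have hL : Function.Bijective L :=
    ⟨Function.LeftInverse.injective h2, Function.RightInverse.surjective h1⟩
  have hdet : |L.det| = 1 := by
    have : L.det = Q.det := by
      rw [hLdef, ContinuousLinearMap.det, Matrix.coe_toEuclideanCLM_eq_toEuclideanLin]
      exact LinearMap.det_toLin (PiLp.basisFun 2 ℝ (Fin p)) Q
    rw [this]
    have := congrArg Matrix.det hQ
    rw [Matrix.det_mul, Matrix.det_transpose, Matrix.det_one] at this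
    have h3 : |Q.det| * |Q.det| = 1 := by rw [← abs_mul, this, abs_one]
    nlinarith [abs_nonneg Q.det]
  refine ⟨hdet, fun v => ρ (L' v), ⟨h.1.comp L'.contDiff, fun u => h.2.1 _, ?_, fun i => ?_, fun i j => ?_⟩,
    fun u => ?_⟩
  · rw [cov L hL 0]; simp [h2, hdet, h.2.2.1]
  · rw [cov L hL 0]; simp [h2, hdet, (mom1 h L i).2]
  · rw [cov L hL 0]; simp only [sub_zero, h2, hdet, (mom2 h L i j).2, one_mul]
    rw [← Matrix.one_apply, ← hQ, Matrix.mul_apply]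
    simp [hLdef, mulVecE_single]
  · rw [mulVecE_eq, ← hLdef]; simp only [h2]

open Filter Topology in
lemma h_bdd {p : ℕ} {ρ ρt : E p → ℝ} (hρ : AdmissibleDensity ρ) (ht : AdmissibleDensity ρt)
    {g h : E p → E p} {m : E p → ℝ} (hg : Continuous g) (hgs : Function.Surjective g)
    (hm : Continuous m) (hm0 : ∀ y, 0 < m y)
    (H : ∀ y w, ρ (y - w) * m y = ρt (g y - h w)) (w₀ : E p) :
    ∃ R, ∀ w ∈ Metric.closedBall w₀ 1, ‖h w‖ ≤ R := by
  obtain ⟨n, hn⟩ : ∃ n : ℕ, volume (g '' Metric.closedBall 0 (n : ℝ)) ≠ 0 := by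
    by_contra hcon
    push Not at hcon
    have h1 := measure_iUnion_null hcon
    rw [← Set.image_iUnion, Metric.iUnion_closedBall_nat, Set.image_univ, hgs.range_eq] at h1
    exact (isOpen_univ.measure_pos volume ⟨(0 : E p), trivial⟩).ne' h1
  set K := g '' Metric.closedBall 0 (n : ℝ) with hK
  have hKc : IsCompact K := (isCompact_closedBall _ _).image hg
  have hρc := hρ.1.continuous
  obtain ⟨⟨y₁, w₁⟩, -, hmin⟩ := ((isCompact_closedBall (0 : E p) (n : ℝ)).prod
    (isCompact_closedBall w₀ 1)).exists_isMinOn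
    (f := fun q : E p × E p => ρ (q.1 - q.2) * m q.1)
    ⟨(0, w₀), by simp⟩ (by fun_prop)
  set ε := ρ (y₁ - w₁) * m y₁ with hε
  have hε0 : 0 < ε := mul_pos (hρ.2.1 _) (hm0 _)
  have hlow : ∀ w ∈ Metric.closedBall w₀ 1, ∀ z ∈ K, ε ≤ ρt (z - h w) := by
    rintro w hw z ⟨y, hy, rfl⟩
    rw [← H]
    exact hmin (a := (y, w)) ⟨hy, hw⟩
  have hvol : 0 < volume.real K := ENNReal.toReal_pos hn hKc.measure_lt_top.ne
  have hlim := (aecover_closedBall (μ := (volume : Measure (E p))) (x := 0)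
    tendsto_id).integral_tendsto_of_countably_generated (int0 ht)
  rw [ht.2.2.1] at hlim
  obtain ⟨R, hR⟩ := (hlim.eventually (lt_mem_nhds (b := 1) (a := 1 - ε * volume.real K)
    (by nlinarith [mul_pos hε0 hvol]))).exists
  obtain ⟨r, hr⟩ := hKc.isBounded.subset_closedBall 0
  refine ⟨R + r, fun w hw => ?_⟩
  by_contra hcon
  push Not at hcon
  set B := Metric.closedBall (0 : E p) (id R) with hB
  have hBm : MeasurableSet B := Metric.isClosed_closedBall.measurableSet
  let F : E p → ℝ := fun u => ρt u - B.indicator ρt u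
  have hFi : Integrable F := (int0 ht).sub ((int0 ht).indicator hBm)
  have h1 : (∫ z, K.indicator (fun _ => ε) z) ≤ ∫ z, F (z - h w) := by
    refine integral_mono ((integrable_indicator_iff hKc.measurableSet).2
      (integrableOn_const hKc.measure_lt_top.ne)) (hFi.comp_sub_right _) fun z => ?_
    simp only [F]
    by_cases hz : z ∈ K
    · rw [Set.indicator_of_mem hz, Set.indicator_of_notMem, sub_zero]
      · exact hlow w hw z hz
      · intro hz'
        have a1 := hr hz
        simp only [hB, id, mem_closedBall_zero_iff] at a1 hz'
        have : ‖h w‖ ≤ ‖z‖ + ‖z - h w‖ := by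
          calc ‖h w‖ = ‖z - (z - h w)‖ := by congr 1; abel
            _ ≤ _ := norm_sub_le _ _
        linarith
    · rw [Set.indicator_of_notMem hz]
      by_cases hz' : z - h w ∈ B
      · simp [Set.indicator_of_mem hz']
      · simp [Set.indicator_of_notMem hz', (ht.2.1 _).le]
  have h2 : (∫ z, F (z - h w)) = 1 - ∫ u in B, ρt u := by
    rw [integral_sub_right_eq_self F (h w)]
    simp only [F]
    rw [integral_sub (int0 ht) ((int0 ht).indicator hBm), integral_indicator hBm, ht.2.2.1]
  rw [h2, integral_indicator hKc.measurableSet] at h1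
  simp only [integral_const, smul_eq_mul, measureReal_restrict_apply_univ] at h1
  linarith

open Filter Topology in
lemma h_cont {p : ℕ} {ρ ρt : E p → ℝ} (hρ : AdmissibleDensity ρ) (ht : AdmissibleDensity ρt)
    {g h : E p → E p} {m : E p → ℝ} (hg : Continuous g) (hgs : Function.Surjective g)
    (hm : Continuous m) (hm0 : ∀ y, 0 < m y)
    (H : ∀ y w, ρ (y - w) * m y = ρt (g y - h w)) : Continuous h := by
  rw [continuous_iff_continuousAt]
  intro w
  obtain ⟨R, hR⟩ := h_bdd hρ ht hg hgs hm hm0 H w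
  have hρc := hρ.1.continuous
  have htc := ht.1.continuous
  rw [ContinuousAt, tendsto_iff_ultrafilter]
  intro U hU
  have hmem : Metric.closedBall (0 : E p) R ∈ (U.map h : Filter (E p)) := by
    have : Metric.closedBall w 1 ∈ (U : Filter (E p)) := hU (Metric.closedBall_mem_nhds _ one_pos)
    refine mem_map.2 (mem_of_superset this fun x hx => ?_)
    simpa using hR x hx
  obtain ⟨a, -, ha⟩ := (isCompact_closedBall (0 : E p) R).ultrafilter_le_nhds (U.map h)
    (le_principal_iff.2 hmem)
  have ha' : Tendsto h U (𝓝 a) := ha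
  have key : ∀ z, ρt (z - a) = ρt (z - h w) := by
    intro z
    obtain ⟨y, rfl⟩ := hgs z
    have t1 : Tendsto (fun w' => ρt (g y - h w')) U (𝓝 (ρt (g y - a))) :=
      (htc.tendsto _).comp (tendsto_const_nhds.sub ha')
    have t2 : Tendsto (fun w' => ρt (g y - h w')) U (𝓝 (ρt (g y - h w))) := by
      simp only [← H]
      exact ((Continuous.tendsto (by fun_prop) w).mono_left hU)
    exact tendsto_nhds_unique t1 t2
  have : h w - a = 0 := nonper ht _ fun u => by
    have := key (u + h w)
    rw [add_sub_cancel_right] at this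
    rw [← this]; congr 1; abel
  rw [sub_eq_zero] at this
  rwa [this]

lemma const_dir {p : ℕ} {ρ : E p → ℝ} (hρ : AdmissibleDensity ρ) (v : E p)
    (hv : ∀ c, fderiv ℝ ρ c v = 0) : v = 0 := by
  refine nonper hρ v fun u => ?_
  have hd : Differentiable ℝ ρ := hρ.1.differentiable one_ne_zero
  have h1 : ∀ t : ℝ, HasDerivAt (fun t : ℝ => ρ (u + t • v)) 0 t := fun t => by
    have h2 : HasDerivAt (fun t : ℝ => u + t • v) v t := by
      simpa using ((hasDerivAt_id t).smul_const v).const_add u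
    have := (hd (u + t • v)).hasFDerivAt.comp_hasDerivAt t h2
    rwa [hv] at this
  have := is_const_of_deriv_eq_zero (fun t => (h1 t).differentiableAt) (fun t => (h1 t).deriv) 1 0
  simpa using this

lemma span_grad {p : ℕ} {ρ : E p → ℝ} (hρ : AdmissibleDensity ρ) :
    Submodule.span ℝ (Set.range fun c => gradient ρ c) = ⊤ := by
  rw [← Submodule.orthogonal_eq_bot_iff, Submodule.eq_bot_iff]
  intro v hv
  refine const_dir hρ v fun c => ?_
  rw [← inner_gradient_left]
  exact (Submodule.mem_orthogonal _ _).1 hv _ (Submodule.subset_span ⟨c, rfl⟩)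

open Filter Topology in
lemma h_smooth {p : ℕ} {ρ ρt : E p → ℝ} (hρ : AdmissibleDensity ρ) (ht : AdmissibleDensity ρt)
    {g h : E p → E p} {m : E p → ℝ} (hgs : Function.Surjective g) (hh : Continuous h)
    (H : ∀ y w, ρ (y - w) * m y = ρt (g y - h w)) : ContDiff ℝ 1 h := by
  rw [contDiff_iff_contDiffAt]
  intro w
  have hco : ∀ j : Fin p, ∃ a : E p →₀ ℝ,
      (a.sum fun y r => r • gradient ρt (g y - h w)) = EuclideanSpace.single j 1 := by
    intro j
    rw [← Finsupp.mem_span_range_iff_exists_finsupp]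
    have : (Set.range fun y => gradient ρt (g y - h w)) = Set.range fun c => gradient ρt c := by
      ext x; constructor
      · rintro ⟨y, rfl⟩; exact ⟨_, rfl⟩
      · rintro ⟨c, rfl⟩
        obtain ⟨y, hy⟩ := hgs (c + h w)
        exact ⟨y, by simp [hy]⟩
    rw [this, span_grad ht]; trivial
  choose a ha using hco
  let P : E p → E p := fun c => WithLp.toLp 2 fun j => ∑ y ∈ (a j).support, a j y * ρt (g y + c)
  have hP : ContDiff ℝ 1 P := by
    rw [contDiff_euclidean]
    intro j
    exact ContDiff.sum fun y _ => contDiff_const.mul (ht.1.comp (contDiff_const.add contDiff_id))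
  have hPd : HasFDerivAt P (ContinuousLinearEquiv.refl ℝ (E p) : E p →L[ℝ] E p) (- h w) := by
    rw [← hasFDerivWithinAt_univ, hasFDerivWithinAt_euclidean]
    intro j
    have hd : Differentiable ℝ ρt := ht.1.differentiable one_ne_zero
    have h1 : HasFDerivAt (fun c => ∑ y ∈ (a j).support, a j y * ρt (g y + c))
        (∑ y ∈ (a j).support, a j y • fderiv ℝ ρt (g y - h w)) (- h w) := by
      refine HasFDerivAt.fun_sum fun y _ => ?_
      refine HasFDerivAt.const_mul ?_ _
      have := (hd (g y - h w)).hasFDerivAt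
      have h3 := HasFDerivAt.comp (g := ρt) (- h w) (f := fun c => g y + c)
        (g' := fderiv ℝ ρt (g y - h w)) (by rw [← sub_eq_add_neg]; exact this)
        ((hasFDerivAt_id (- h w)).const_add (g y))
      exact h3
    refine (HasFDerivAt.congr_fderiv h1 ?_).hasFDerivWithinAt
    ext v
    have h2 := congrArg (fun x => inner ℝ x v) (ha j)
    simp only [Finsupp.sum, sum_inner, inner_smul_left, inner_gradient_left,
      EuclideanSpace.inner_single_left] at h2
    simpa using h2
  have hPh : ContDiff ℝ 1 fun w' => P (- h w') := by
    rw [contDiff_euclidean]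
    intro j
    simp only [P]
    have : (fun w' => ∑ y ∈ (a j).support, a j y * ρt (g y + - h w')) =
      fun w' => ∑ y ∈ (a j).support, a j y * (ρ (y - w') * m y) := by
      funext w'; simp only [H]; simp only [sub_eq_add_neg]
    rw [this]
    exact ContDiff.sum fun y _ => contDiff_const.mul
      ((hρ.1.comp (contDiff_const.sub contDiff_id)).mul contDiff_const)
  have hl := (hP.contDiffAt (x := - h w)).to_localInverse hPd one_ne_zero
  have hs := (hP.contDiffAt (x := - h w)).hasStrictFDerivAt' hPd one_ne_zero
  have hev := hs.eventually_left_inverse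
  have hcomp : ContDiffAt ℝ 1 (fun w' => - ((hP.contDiffAt (x := - h w)).localInverse hPd one_ne_zero
      (P (- h w')))) w := (ContDiffAt.comp w hl (hPh.contDiffAt)).neg
  refine hcomp.congr_of_eventuallyEq ?_
  have hT : Tendsto (fun w' => - h w') (𝓝 w) (𝓝 (- h w)) := (hh.neg).tendsto w
  filter_upwards [hT.eventually hev] with w' hw'
  have hw2 : (hP.contDiffAt (x := - h w)).localInverse hPd one_ne_zero (P (- h w')) = - h w' := hw'
  rw [hw2, neg_neg]

lemma h_deriv {p : ℕ} {ρ ρt : E p → ℝ} (hρ : AdmissibleDensity ρ) (ht : AdmissibleDensity ρt)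
    {g h : E p → E p} {m : E p → ℝ} (hh : ContDiff ℝ 1 h)
    (H : ∀ y w, ρ (y - w) * m y = ρt (g y - h w)) (y w v : E p) :
    m y * fderiv ℝ ρ (y - w) v = fderiv ℝ ρt (g y - h w) (fderiv ℝ h w v) := by
  have hd : Differentiable ℝ ρ := hρ.1.differentiable one_ne_zero
  have hdt : Differentiable ℝ ρt := ht.1.differentiable one_ne_zero
  have hdh : Differentiable ℝ h := hh.differentiable one_ne_zero
  have h1 := ((hd (y - w)).hasFDerivAt.comp w ((hasFDerivAt_id w).const_sub y)).mul_const (m y)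
  have h2 := (hdt (g y - h w)).hasFDerivAt.comp w ((hdh w).hasFDerivAt.const_sub (g y))
  have h3 : (fun w => (ρ ∘ fun w => y - w) w * m y) = ρt ∘ fun w => g y - h w := by
    funext w; exact H y w
  have h1' : HasFDerivAt (fun w => (ρ ∘ fun w => y - w) w * m y) _ w := h1
  rw [h3] at h1'
  have := congrArg (fun A : E p →L[ℝ] ℝ => A v) (h1'.unique h2)
  simpa using this

lemma h_equiv {p : ℕ} {ρ ρt : E p → ℝ} (hρ : AdmissibleDensity ρ) (ht : AdmissibleDensity ρt)
    {g h : E p → E p} {m : E p → ℝ} (hm0 : ∀ y, 0 < m y) (hh : ContDiff ℝ 1 h)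
    (H : ∀ y w, ρ (y - w) * m y = ρt (g y - h w)) (w : E p) :
    ∃ A : E p ≃L[ℝ] E p, (A : E p →L[ℝ] E p) = fderiv ℝ h w := by
  have hinj : Function.Injective (fderiv ℝ h w : E p →ₗ[ℝ] E p) := by
    rw [injective_iff_map_eq_zero]
    intro v hv
    refine const_dir hρ v fun c => ?_
    have := h_deriv hρ ht hh H (c + w) w v
    have hv' : fderiv ℝ h w v = 0 := hv
    rw [hv', map_zero, add_sub_cancel_right] at this
    exact (mul_eq_zero.1 this).resolve_left (hm0 _).ne'
  exact ⟨(LinearEquiv.ofInjectiveEndo _ hinj).toContinuousLinearEquiv, by ext v; rfl⟩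

lemma hess {p : ℕ} {ρ : E p → ℝ} (hmax : LocalMaxCondition ρ) :
    ∃ (u₀ : E p) (B : E p →L[ℝ] E p →L[ℝ] ℝ), fderiv ℝ ρ u₀ = 0 ∧
      HasFDerivAt (fderiv ℝ ρ) B u₀ ∧ ∀ v, v ≠ 0 → B v v < 0 := by
  obtain ⟨u₀, h1, h2, h3⟩ := hmax
  refine ⟨u₀, fderiv ℝ (fderiv ℝ ρ) u₀, h1.fderiv_eq_zero, ?_, fun v hv => ?_⟩
  · exact ((h2.fderiv_right (m := 1) (by norm_num)).differentiableAt one_ne_zero).hasFDerivAt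
  · have := h3 v hv
    rw [iteratedFDeriv_two_apply] at this
    simpa using this

open Filter Topology in
lemma g_eq {p : ℕ} {ρ ρt : E p → ℝ} (hρ : AdmissibleDensity ρ) (ht : AdmissibleDensity ρt)
    {g h : E p → E p} {m : E p → ℝ} (hg : Continuous g) (hm0 : ∀ y, 0 < m y) (hh : ContDiff ℝ 1 h)
    (H : ∀ y w, ρ (y - w) * m y = ρt (g y - h w))
    (u₀ : E p) (B : E p →L[ℝ] E p →L[ℝ] ℝ) (hu : fderiv ℝ ρ u₀ = 0)
    (hB : HasFDerivAt (fderiv ℝ ρ) B u₀) (hneg : ∀ v, v ≠ 0 → B v v < 0) :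
    ∃ c : E p, ∀ y, g y = h (y - u₀) + c := by
  have hcrit : ∀ y w, fderiv ℝ ρt (g y - h w) = 0 ↔ fderiv ℝ ρ (y - w) = 0 := by
    intro y w
    obtain ⟨A, hA⟩ := h_equiv hρ ht hm0 hh H w
    constructor
    · intro hz
      ext v
      have := h_deriv hρ ht hh H y w v
      rw [hz] at this
      simpa [(hm0 y).ne'] using this
    · intro hz
      ext v
      have := h_deriv hρ ht hh H y w (A.symm v)
      rw [hz, ← hA] at this
      simpa using this.symm
  have hev : ∀ᶠ u in 𝓝[≠] u₀, fderiv ℝ ρ u ≠ 0 := by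
    refine hB.eventually_ne ?_
    have hker : LinearMap.ker (B : E p →ₗ[ℝ] (E p →L[ℝ] ℝ)) = ⊥ := by
      rw [LinearMap.ker_eq_bot']
      intro v hv
      by_contra hne
      have h1 := hneg v hne
      have h2 : B v = 0 := hv
      rw [h2] at h1
      simp at h1
    obtain ⟨K, -, hK⟩ := LinearMap.exists_antilipschitzWith _ hker
    exact ⟨K, hK⟩
  rw [eventually_nhdsWithin_iff] at hev
  let c : E p → E p := fun y => g y - h (y - u₀)
  have hcc : Continuous c := hg.sub (hh.continuous.comp (continuous_id.sub continuous_const))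
  have hloc : IsLocallyConstant c := by
    rw [IsLocallyConstant.iff_eventually_eq]
    intro y
    obtain ⟨A, hA⟩ := h_equiv hρ ht hm0 hh H (y - u₀)
    have hs : HasStrictFDerivAt h (A : E p →L[ℝ] E p) (y - u₀) := by
      rw [hA]; exact hh.contDiffAt.hasStrictFDerivAt one_ne_zero
    have hmap := hs.map_nhds_eq_of_equiv
    have hT : Tendsto (fun w => y - w) (𝓝 (y - u₀)) (𝓝 u₀) := by
      have : Continuous fun w : E p => y - w := by fun_prop
      simpa using this.tendsto (y - u₀)
    have h1 : ∀ᶠ w in 𝓝 (y - u₀), h w = h (y - u₀) ∨ fderiv ℝ ρt (g y - h w) ≠ 0 := by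
      filter_upwards [hT.eventually hev] with w hw
      by_cases hwe : y - w = u₀
      · left; rw [← hwe]; congr 1; abel
      · right; rw [Ne, hcrit]; exact hw hwe
    have h2 : ∀ᶠ a in 𝓝 (h (y - u₀)), a = h (y - u₀) ∨ fderiv ℝ ρt (g y - a) ≠ 0 := by
      rw [← hmap, eventually_map]; exact h1
    have hT2 : Tendsto (fun y' => g y - c y') (𝓝 y) (𝓝 (h (y - u₀))) := by
      have : Continuous fun y' => g y - c y' := by fun_prop
      simpa [c] using this.tendsto y
    filter_upwards [hT2.eventually h2] with y' hy'
    rcases hy' with hy' | hy'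
    · have : c y' = g y - h (y - u₀) := by rw [← hy']; abel
      exact this
    · exfalso; apply hy'
      rw [sub_sub_cancel]
      simp only [c]
      rw [hcrit]; simpa using hu
  refine ⟨c 0, fun y => ?_⟩
  have := hloc.apply_eq_of_isPreconnected isPreconnected_univ (Set.mem_univ (0 : E p)) (Set.mem_univ y)
  rw [this]; simp [c]

lemma sqrtB {p : ℕ} (B : E p →L[ℝ] E p →L[ℝ] ℝ) (hneg : ∀ v, v ≠ 0 → B v v < 0) :
    ∃ S : E p ≃L[ℝ] E p, ∀ v, B v v = - ‖S v‖ ^ 2 := by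
  let e : Fin p → E p := fun i => EuclideanSpace.single i 1
  let M : Matrix (Fin p) (Fin p) ℝ := fun i j => - (B (e i) (e j) + B (e j) (e i)) / 2
  have hexp : ∀ v : E p, v = ∑ j, v j • e j := fun v => by
    ext k; simp [e, Finset.sum_apply, Pi.single_apply]
  have hM : ∀ v : E p, (v.ofLp) ⬝ᵥ (M *ᵥ v.ofLp) = - B v v := by
    intro v
    have h1 : B v v = ∑ i, ∑ j, v i * v j * B (e i) (e j) := by
      conv_lhs => rw [hexp v]
      simp [Finset.mul_sum, mul_assoc]
      try rw [Finset.sum_comm]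
      try exact Finset.sum_congr rfl fun i _ => Finset.sum_congr rfl fun j _ => by ring
    have h2 : B v v = ∑ i, ∑ j, v i * v j * B (e j) (e i) := by
      rw [h1, Finset.sum_comm]
      exact Finset.sum_congr rfl fun i _ => Finset.sum_congr rfl fun j _ => by ring
    have h3 : - B v v = - (B v v + B v v) / 2 := by ring
    rw [h3]
    nth_rewrite 1 [h1]
    rw [h2, ← Finset.sum_add_distrib, ← Finset.sum_neg_distrib, Finset.sum_div]
    simp only [dotProduct, Matrix.mulVec]
    refine Finset.sum_congr rfl fun i _ => ?_
    rw [← Finset.sum_add_distrib, ← Finset.sum_neg_distrib, Finset.sum_div, Finset.mul_sum]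
    refine Finset.sum_congr rfl fun j _ => ?_
    simp only [M]; ring
  have hnn : ∀ v, 0 ≤ - B v v := fun v => by
    by_cases hv : v = 0
    · simp [hv]
    · linarith [hneg v hv]
  have hps : M.PosSemidef := by
    refine Matrix.PosSemidef.of_dotProduct_mulVec_nonneg ?_ fun x => ?_
    · ext i j; rw [Matrix.conjTranspose_apply]; simp only [M, star_trivial]; ring
    · have := hM (WithLp.toLp 2 x)
      simp only [star_trivial]
      rw [this]; exact hnn _
  obtain ⟨R, hR⟩ : ∃ R : Matrix (Fin p) (Fin p) ℝ, M = Rᵀ * R := by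
    open scoped MatrixOrder in
    obtain ⟨R, hR⟩ := CStarAlgebra.nonneg_iff_eq_star_mul_self.mp hps.nonneg
    exact ⟨R, hR⟩
  let T : E p →L[ℝ] E p := Matrix.toEuclideanCLM (𝕜 := ℝ) R
  have hT : ∀ v, B v v = - ‖T v‖ ^ 2 := by
    intro v
    have h1 : ‖T v‖ ^ 2 = (R *ᵥ v.ofLp) ⬝ᵥ (R *ᵥ v.ofLp) := by
      rw [EuclideanSpace.norm_sq_eq]
      simp [T, dotProduct, sq]
    have h2 := hM v
    rw [hR, ← Matrix.mulVec_mulVec, Matrix.dotProduct_mulVec, Matrix.vecMul_transpose] at h2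
    rw [h1, h2]; ring
  have hinj : Function.Injective (T : E p →ₗ[ℝ] E p) := by
    rw [injective_iff_map_eq_zero]
    intro v hv
    by_contra hne
    have h1 := hneg v hne
    have h2 : T v = 0 := hv
    rw [hT, h2] at h1
    simp at h1
  exact ⟨(LinearEquiv.ofInjectiveEndo _ hinj).toContinuousLinearEquiv, hT⟩

/-- A diffeomorphism whose derivative is everywhere an isometry for a fixed metric is affine. -/
lemma affine_of_iso {p : ℕ} (e : E p ≃ E p) (hφ : ContDiff ℝ 1 e) (hh : ContDiff ℝ 1 e.symm)
    (S : E p ≃L[ℝ] E p) (C : E p ≃L[ℝ] E p)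
    (hS : ∀ y v, ‖S (fderiv ℝ e y v)‖ = ‖S (C v)‖) :
    ∃ (L : E p →L[ℝ] E p) (b : E p), ∀ w, e.symm w = L w + b := by
  let M : E p ≃L[ℝ] E p := C.trans S
  let ψ : E p ≃ E p := (M.symm.toEquiv.trans e).trans S.toEquiv
  have hdφ : Differentiable ℝ e := hφ.differentiable one_ne_zero
  have hdh : Differentiable ℝ e.symm := hh.differentiable one_ne_zero
  have hd1 : ∀ x, HasFDerivAt ψ ((S : E p →L[ℝ] E p).comp ((fderiv ℝ e (M.symm x)).comp
      (M.symm : E p →L[ℝ] E p))) x := fun x =>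
    (S.hasFDerivAt).comp x ((hdφ _).hasFDerivAt.comp x M.symm.hasFDerivAt)
  have hd2 : ∀ x, HasFDerivAt ψ.symm ((M : E p →L[ℝ] E p).comp ((fderiv ℝ e.symm (S.symm x)).comp
      (S.symm : E p →L[ℝ] E p))) x := fun x =>
    (M.hasFDerivAt).comp x ((hdh _).hasFDerivAt.comp x S.symm.hasFDerivAt)
  have hl1 : LipschitzWith 1 ψ := by
    refine lipschitzWith_of_nnnorm_fderiv_le (𝕜 := ℝ) (fun x => (hd1 x).differentiableAt) fun x => ?_
    rw [(hd1 x).fderiv, ← NNReal.coe_le_coe]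
    refine ContinuousLinearMap.opNorm_le_bound _ (by simp) fun v => ?_
    have := hS (M.symm x) (M.symm v)
    have h2 : S (C (M.symm v)) = v := M.apply_symm_apply v
    rw [h2] at this
    simpa using this.le
  have hl2 : LipschitzWith 1 ψ.symm := by
    refine lipschitzWith_of_nnnorm_fderiv_le (𝕜 := ℝ) (fun x => (hd2 x).differentiableAt) fun x => ?_
    rw [(hd2 x).fderiv, ← NNReal.coe_le_coe]
    refine ContinuousLinearMap.opNorm_le_bound _ (by simp) fun v => ?_
    have := hS (e.symm (S.symm x)) (fderiv ℝ e.symm (S.symm x) (S.symm v))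
    have h2 : fderiv ℝ e (e.symm (S.symm x)) (fderiv ℝ e.symm (S.symm x) (S.symm v)) = S.symm v := by
      have h3 := (hdφ (e.symm (S.symm x))).hasFDerivAt.comp (S.symm x) (hdh (S.symm x)).hasFDerivAt
      have h4 : e ∘ e.symm = id := by funext z; simp
      rw [h4] at h3
      have := congrArg (fun A : E p →L[ℝ] E p => A (S.symm v)) (h3.unique (hasFDerivAt_id _))
      simpa using this
    rw [h2] at this
    simpa [M] using this.ge
  let ψi : E p ≃ᵢ E p := IsometryEquiv.mk ψ.symm (Isometry.of_dist_eq fun x y => by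
    refine le_antisymm (by simpa using hl2.dist_le_mul x y) ?_
    simpa using hl1.dist_le_mul (ψ.symm x) (ψ.symm y))
  let T := ψi.toRealAffineIsometryEquiv
  have hT : ∀ x, ψ.symm x = T.linearIsometryEquiv x + ψ.symm 0 := fun x => by
    have := T.map_vadd 0 x
    have h2 : ψi x = T.linearIsometryEquiv x + ψi 0 := by simpa [T] using this
    exact h2
  refine ⟨(M.symm : E p →L[ℝ] E p).comp ((T.linearIsometryEquiv.toContinuousLinearEquiv : E p →L[ℝ] E p).comp
    (S : E p →L[ℝ] E p)), M.symm (ψ.symm 0), fun w => ?_⟩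
  have h1 : e.symm w = M.symm (ψ.symm (S w)) := by simp [ψ]
  rw [h1, hT, map_add]; rfl

open Filter Topology in
lemma core {p : ℕ} {ρ ρt : E p → ℝ} (hρ : AdmissibleDensity ρ) (ht : AdmissibleDensity ρt)
    (hmax : LocalMaxCondition ρ)
    {g h : E p → E p} {m : E p → ℝ} (hg : Continuous g) (hgb : Function.Bijective g)
    (hg0 : g 0 = 0) (hm : Continuous m) (hm0 : ∀ y, 0 < m y)
    (H : ∀ y w, ρ (y - w) * m y = ρt (g y - h w)) :
    ∃ Q : Matrix (Fin p) (Fin p) ℝ, Q * Qᵀ = 1 ∧ (∀ y, g y = mulVecE Q y) ∧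
      ∀ w, h w = mulVecE Q w := by
  have hhc := h_cont hρ ht hg hgb.2 hm hm0 H
  have hh := h_smooth hρ ht hgb.2 hhc H
  obtain ⟨u₀, B, hu, hB, hneg⟩ := hess hmax
  obtain ⟨c, hc⟩ := g_eq hρ ht hg hm0 hh H u₀ B hu hB hneg
  have hhg : ∀ w, h w = g (w + u₀) - c := fun w => by rw [hc]; simp
  have hmc : ∀ y, m y = m 0 := by
    have h1 : ∀ y, ρ u₀ * m y = ρt c := fun y => by
      have := H y (y - u₀)
      rw [hc] at this
      simpa using this
    intro y
    exact mul_left_cancel₀ (hρ.2.1 u₀).ne' ((h1 y).trans (h1 0).symm)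
  have hhb : Function.Bijective h := by
    constructor
    · intro a b hab
      rw [hhg, hhg, sub_left_inj] at hab
      exact add_right_cancel (hgb.1 hab)
    · intro z
      obtain ⟨y, hy⟩ := hgb.2 (z + c)
      exact ⟨y - u₀, by rw [hhg]; simp [hy]⟩
  choose A hA using h_equiv hρ ht hm0 hh H
  have hopen : IsOpenMap h := by
    rw [isOpenMap_iff_nhds_le]
    intro w
    have hs : HasStrictFDerivAt h (A w : E p →L[ℝ] E p) w := by
      rw [hA]; exact hh.contDiffAt.hasStrictFDerivAt one_ne_zero
    exact hs.map_nhds_eq_of_equiv.ge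
  let ho : E p ≃ₜ E p := (Equiv.ofBijective h hhb).toHomeomorphOfContinuousOpen hhc hopen
  have hoh : ∀ w, ho w = h w := fun w => rfl
  have hφ : ContDiff ℝ 1 ho.symm := ho.contDiff_symm (f₀' := A) (fun a => by
    rw [hA]; exact (hh.differentiable one_ne_zero a).hasFDerivAt) hh
  let φ : E p → E p := ho.symm
  have hdφ : Differentiable ℝ φ := hφ.differentiable one_ne_zero
  have hhφ : ∀ x, h (φ x) = x := fun x => ho.apply_symm_apply x
  -- functional equation in terms of `φ`
  have Hφ : ∀ x y, ρt (c + x - y) = m 0 * ρ (φ x - φ y + u₀) := by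
    intro x y
    have := H (φ x + u₀) (φ y)
    rw [hmc, hc, add_sub_cancel_right, hhφ, hhφ] at this
    rw [add_comm c x, ← this, mul_comm]; congr 2; abel
  have hd : Differentiable ℝ ρ := hρ.1.differentiable one_ne_zero
  have hdt : Differentiable ℝ ρt := ht.1.differentiable one_ne_zero
  have Hd : ∀ x y v, fderiv ℝ ρt (c + x - y) v =
      m 0 * fderiv ℝ ρ (φ x - φ y + u₀) (fderiv ℝ φ x v) := by
    intro x y v
    have h1 := (hdt (c + x - y)).hasFDerivAt.comp x (((hasFDerivAt_id x).const_add c).sub_const y)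
    have h2 := ((hd (φ x - φ y + u₀)).hasFDerivAt.comp x
      (((hdφ x).hasFDerivAt.sub_const (φ y)).add_const u₀)).const_mul (m 0)
    have h3 : (ρt ∘ fun x => c + x - y) =
        fun x => m 0 * (ρ ∘ fun x => φ x - φ y + u₀) x := by
      funext x; exact Hφ x y
    have h1' : HasFDerivAt (ρt ∘ fun x => c + x - y) _ x := h1
    rw [h3] at h1'
    have := congrArg (fun A : E p →L[ℝ] ℝ => A v) (h1'.unique h2)
    simpa using this
  have hlim : ∀ y v, Tendsto (fun t : ℝ => t⁻¹ * fderiv ℝ ρt (c + t • v) v) (𝓝[≠] 0)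
      (𝓝 (m 0 * B (fderiv ℝ φ y v) (fderiv ℝ φ y v))) := by
    intro y v
    have hline : HasDerivAt (fun t : ℝ => y + t • v) v 0 := by
      simpa using ((hasDerivAt_id (0 : ℝ)).smul_const v).const_add y
    have hF : HasDerivAt (fun t : ℝ => fderiv ℝ ρ (φ (y + t • v) - φ y + u₀))
        (B (fderiv ℝ φ y v)) 0 := by
      have h1 : HasDerivAt (fun t : ℝ => φ (y + t • v) - φ y + u₀) (fderiv ℝ φ y v) 0 := by
        have h2 : HasFDerivAt φ (fderiv ℝ φ y) (y + (0 : ℝ) • v) := by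
          simpa using (hdφ y).hasFDerivAt
        exact ((h2.comp_hasDerivAt (0 : ℝ) hline).sub_const (φ y)).add_const u₀
      have h3 : HasFDerivAt (fderiv ℝ ρ) B (φ (y + (0 : ℝ) • v) - φ y + u₀) := by
        simpa using hB
      exact h3.comp_hasDerivAt (0 : ℝ) h1
    rw [hasDerivAt_iff_tendsto_slope_zero] at hF
    simp only [zero_add, zero_smul, add_zero, sub_self, hu, sub_zero] at hF
    have hG : Tendsto (fun t : ℝ => fderiv ℝ φ (y + t • v) v) (𝓝[≠] 0) (𝓝 (fderiv ℝ φ y v)) := by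
      have hcf : Continuous (fderiv ℝ φ) := hφ.continuous_fderiv one_ne_zero
      have : Continuous fun t : ℝ => fderiv ℝ φ (y + t • v) v := by fun_prop
      have := this.tendsto 0
      simp only [zero_smul, add_zero] at this
      exact this.mono_left nhdsWithin_le_nhds
    have happ := ((isBoundedBilinearMap_apply (𝕜 := ℝ) (E := E p) (F := ℝ)).continuous.tendsto
      (_, _)).comp (hF.prodMk_nhds hG)
    have := happ.const_mul (m 0)
    refine this.congr fun t => ?_
    have h5 := Hd (y + t • v) y v
    have h6 : c + (y + t • v) - y = c + t • v := by abel
    rw [h6] at h5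
    rw [h5]
    simp only [Function.comp_apply, ContinuousLinearMap.smul_apply, smul_eq_mul]
    ring
  have hBeq : ∀ y v, B (fderiv ℝ φ y v) (fderiv ℝ φ y v) = B (fderiv ℝ φ 0 v) (fderiv ℝ φ 0 v) :=
    fun y v => mul_left_cancel₀ (hm0 0).ne' (tendsto_nhds_unique (hlim y v) (hlim 0 v))
  obtain ⟨S, hS⟩ := sqrtB B hneg
  -- `fderiv φ 0` is invertible
  have hC : ((A (φ 0)).symm : E p →L[ℝ] E p) = fderiv ℝ φ 0 := by
    ext1 v
    have h3 := (hh.differentiable one_ne_zero (φ 0)).hasFDerivAt.comp (0 : E p) (hdφ 0).hasFDerivAt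
    have h4 : h ∘ φ = id := by funext z; exact hhφ z
    rw [h4, ← hA] at h3
    have := congrArg (fun A : E p →L[ℝ] E p => A v) (h3.unique (hasFDerivAt_id _))
    have h5 : A (φ 0) (fderiv ℝ φ 0 v) = v := by simpa using this
    exact (A (φ 0)).symm_apply_eq.2 h5.symm
  obtain ⟨L, b, hL⟩ := affine_of_iso ho.toEquiv.symm hφ hh S (A (φ 0)).symm (fun y v => by
    have h1 := hBeq y v
    rw [hS, hS, neg_inj] at h1
    have h2 : (A (φ 0)).symm v = fderiv ℝ φ 0 v := by rw [← hC]; rfl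
    rw [h2]
    exact (sq_eq_sq₀ (norm_nonneg _) (norm_nonneg _)).1 h1)
  have hL' : ∀ w, h w = L w + b := hL
  have hgL : ∀ y, g y = L y := by
    have h1 : ∀ y, g y = L y + (b + c - L u₀) := fun y => by
      rw [hc, hL', map_sub]; abel
    have h2 := h1 0
    rw [hg0, map_zero, zero_add] at h2
    intro y; rw [h1 y, ← h2, add_zero]
  have hLb : Function.Bijective L := by
    have : (L : E p → E p) = g := by funext y; exact (hgL y).symm
    rw [this]; exact hgb
  obtain ⟨hb, hcov⟩ := final_mom hρ ht L hLb b (m 0) (fun u => by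
    have := H u 0
    rw [hgL, hL', hmc, map_zero, zero_add, sub_zero] at this
    rw [← this, mul_comm])
  let Q : Matrix (Fin p) (Fin p) ℝ := fun i j => L (EuclideanSpace.single j 1) i
  have hQL : ∀ u, mulVecE Q u = L u := fun u => by
    ext i; rw [coordL]; rfl
  refine ⟨Q, ?_, fun y => by rw [hQL, hgL], fun w => by rw [hQL, hL', hb, add_zero]⟩
  ext i j
  rw [Matrix.mul_apply, Matrix.one_apply, ← hcov i j]
  rfl

lemma reduction {p n : ℕ}
    {f₀ : E p → E p} (hf₀lip : Continuous f₀) 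
    (hf₀det : ∀ᵐ z : E p, DifferentiableAt ℝ f₀ z ∧ (fderiv ℝ f₀ z).det ≠ 0)
    {f₁ : E n → E p} (hf₁ : Continuous f₁) 
    {ρ : E p → ℝ} (hρ : AdmissibleDensity ρ) 
    {ft₀ : E p → E p} (hft₀ : Continuous ft₀) 
    {ft₁ : E n → E p} (hft₁ : Continuous ft₁) {ρt : E p → ℝ} (ht : AdmissibleDensity ρt)
    (hae : ∀ᵐ w : E p × E n,
          ρ (f₀ w.1 - f₁ w.2) * |(fderiv ℝ f₀ w.1).det|
            = ρt (ft₀ w.1 - ft₁ w.2) * |(fderiv ℝ ft₀ w.1).det|) :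
    ∃ m : E p → ℝ, Continuous m ∧ (∀ z, 0 < m z) ∧
      ∀ z x, ρ (f₀ z - f₁ x) * m z = ρt (ft₀ z - ft₁ x) := by
  have hρc := hρ.1.continuous
  have htc := ht.1.continuous
  let R : E p × E n → ℝ := fun w => ρt (ft₀ w.1 - ft₁ w.2) / ρ (f₀ w.1 - f₁ w.2)
  have hR : Continuous R := by
    refine Continuous.div (by fun_prop) (by fun_prop) fun w => (hρ.2.1 _).ne'
  let r : E p → ℝ := fun z => |(fderiv ℝ f₀ z).det| / |(fderiv ℝ ft₀ z).det|
  have hdet' : ∀ᵐ w : E p × E n, (fderiv ℝ f₀ w.1).det ≠ 0 := by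
    have h1 : ∀ᵐ z : E p, (fderiv ℝ f₀ z).det ≠ 0 := hf₀det.mono fun z hz => hz.2
    exact (Measure.quasiMeasurePreserving_fst (μ := (volume : Measure (E p)))
      (ν := (volume : Measure (E n)))).ae h1
  have h1 : ∀ᵐ w : E p × E n, R w = r w.1 := by
    filter_upwards [hae, hdet'] with w hw hdw
    have hp1 := hρ.2.1 (f₀ w.1 - f₁ w.2)
    have hp2 := ht.2.1 (ft₀ w.1 - ft₁ w.2)
    have hd1 : 0 < |(fderiv ℝ f₀ w.1).det| := abs_pos.2 hdw
    have hd2 : |(fderiv ℝ ft₀ w.1).det| ≠ 0 := by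
      intro h0
      rw [h0, mul_zero] at hw
      exact (mul_pos hp1 hd1).ne' hw
    simp only [R, r]
    rw [div_eq_div_iff hp1.ne' hd2]
    linarith
  have h2 : ∀ᵐ x : E n, ∀ᵐ z : E p, R (z, x) = r z := by
    have h3 := (Measure.measurePreserving_swap (μ := (volume : Measure (E n)))
      (ν := (volume : Measure (E p)))).quasiMeasurePreserving.ae h1
    exact Measure.ae_ae_of_ae_prod h3
  obtain ⟨x₀, hx₀⟩ := h2.exists
  have h4 : ∀ᵐ w : E p × E n, R (w.1, x₀) = r w.1 :=
    (Measure.quasiMeasurePreserving_fst (μ := (volume : Measure (E p)))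
      (ν := (volume : Measure (E n)))).ae hx₀
  have h5 : R = fun w => R (w.1, x₀) := by
    rw [← Continuous.ae_eq_iff_eq (volume : Measure (E p × E n)) hR (by fun_prop)]
    filter_upwards [h1, h4] with w ha hb
    rw [ha, hb]
  refine ⟨fun z => R (z, x₀), by fun_prop, fun z => div_pos (ht.2.1 _) (hρ.2.1 _), fun z x => ?_⟩
  have h6 : R (z, x) = R (z, x₀) := congrFun h5 (z, x)
  simp only [← h6, R]
  rw [mul_div_cancel₀ _ (hρ.2.1 _).ne']

end SVAR

/-- **Identification of the (endogenously) nonlinear SVAR** (Theorem `thm:shockid`):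
a candidate parametrisation `(f̃₀, f̃₁)` is observationally equivalent to `(f₀, f̄₁, ρ)` for
some admissible density `ρ̃` if and only if it is an orthogonal transformation of `(f₀, f̄₁)`. -/
theorem nonlinear_svar_identification
    (p k : ℕ) (hp : 1 ≤ p) (hk : 1 ≤ k)
    (f₀ : E p → E p) (hf₀lip : LocallyLipschitz f₀) (hf₀bij : Function.Bijective f₀)
    (hf₀0 : f₀ 0 = 0) (hf₀inv : LocallyLipschitz (Function.invFun f₀))
    (hf₀det : ∀ᵐ z : E p, DifferentiableAt ℝ f₀ z ∧ (fderiv ℝ f₀ z).det ≠ 0)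
    (f₁ : E (k * p) → E p) (hf₁lip : LocallyLipschitz f₁) (hf₁surj : Function.Surjective f₁)
    (hf₁rank : ∀ᵐ z : E (k * p), DifferentiableAt ℝ f₁ z ∧
      LinearMap.rank (fderiv ℝ f₁ z).toLinearMap = (p : Cardinal))
    (ρ : E p → ℝ) (hρ : AdmissibleDensity ρ) (hρmax : LocalMaxCondition ρ)
    (ft₀ : E p → E p) (hft₀lip : LocallyLipschitz ft₀) (hft₀bij : Function.Bijective ft₀)
    (hft₀0 : ft₀ 0 = 0)
    (hft₀det : ∀ᵐ z : E p, DifferentiableAt ℝ ft₀ z ∧ (fderiv ℝ ft₀ z).det ≠ 0)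
    (ft₁ : E (k * p) → E p) (hft₁lip : LocallyLipschitz ft₁) :
    (∃ ρt : E p → ℝ, AdmissibleDensity ρt ∧
        ∀ᵐ w : E p × E (k * p),
          ρ (f₀ w.1 - f₁ w.2) * |(fderiv ℝ f₀ w.1).det|
            = ρt (ft₀ w.1 - ft₁ w.2) * |(fderiv ℝ ft₀ w.1).det|)
      ↔ ∃ Q : Matrix (Fin p) (Fin p) ℝ, Q * Qᵀ = 1 ∧
          (∀ z : E p, ft₀ z = mulVecE Q (f₀ z)) ∧
          (∀ z : E (k * p), ft₁ z = mulVecE Q (f₁ z)) := by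
  have hinv : ∀ y, f₀ (Function.invFun f₀ y) = y := Function.rightInverse_invFun hf₀bij.2
  have hinv' : ∀ z, Function.invFun f₀ (f₀ z) = z := Function.leftInverse_invFun hf₀bij.1
  constructor
  · rintro ⟨ρt, ht, hae⟩
    obtain ⟨m, hmc, hm0, Hm⟩ := SVAR.reduction hf₀lip.continuous hf₀det hf₁lip.continuous hρ
      hft₀lip.continuous hft₁lip.continuous ht hae
    have hinvc := hf₀inv.continuous
    choose s hs using hf₁surj
    obtain ⟨Q, hQ, hQ0, hQ1⟩ := SVAR.core (g := fun y => ft₀ (Function.invFun f₀ y))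
      (h := fun w => ft₁ (s w)) (m := fun y => m (Function.invFun f₀ y)) hρ ht hρmax
      (hft₀lip.continuous.comp hinvc)
      (hft₀bij.comp ⟨Function.LeftInverse.injective hinv, Function.RightInverse.surjective hinv'⟩)
      (by
        have h1 : Function.invFun f₀ 0 = 0 := by rw [← hf₀0, hinv', hf₀0]
        simp only [h1, hft₀0])
      (hmc.comp hinvc) (fun y => hm0 _)
      (fun y w => by
        have := Hm (Function.invFun f₀ y) (s w)
        rwa [hinv, hs] at this)
    refine ⟨Q, hQ, fun z => ?_, fun z => ?_⟩
    · have := hQ0 (f₀ z)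
      simpa only [hinv'] using this
    · rw [← hQ1 (f₁ z)]
      have : ft₁ (s (f₁ z)) - ft₁ z = 0 := SVAR.nonper ht _ fun u => by
        obtain ⟨y, hy⟩ := hft₀bij.2 (u + ft₁ (s (f₁ z)))
        have h1 := Hm y z
        have h2 := Hm y (s (f₁ z))
        rw [hs] at h2
        rw [h1, hy] at h2
        rw [add_sub_cancel_right] at h2
        rw [← h2]; congr 1; abel
      exact (sub_eq_zero.1 this).symm
  · rintro ⟨Q, hQ, h0, h1⟩
    obtain ⟨hdet, ρt, ht, hρt⟩ := SVAR.easy hρ Q hQ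
    refine ⟨ρt, ht, ?_⟩
    have h2 : ∀ᵐ w : E p × E (k * p), DifferentiableAt ℝ f₀ w.1 ∧ (fderiv ℝ f₀ w.1).det ≠ 0 :=
      (Measure.quasiMeasurePreserving_fst (μ := (volume : Measure (E p)))
        (ν := (volume : Measure (E (k * p))))).ae hf₀det
    filter_upwards [h2] with w hw
    have h3 : ft₀ = fun z => Matrix.toEuclideanCLM (𝕜 := ℝ) Q (f₀ z) := by
      funext z; rw [h0, SVAR.mulVecE_eq]
    have h4 : fderiv ℝ ft₀ w.1 =
        (Matrix.toEuclideanCLM (𝕜 := ℝ) Q : E p →L[ℝ] E p).comp (fderiv ℝ f₀ w.1) := by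
      rw [h3]
      exact ((ContinuousLinearMap.hasFDerivAt _).comp w.1 hw.1.hasFDerivAt).fderiv
    have h5 : |(fderiv ℝ ft₀ w.1).det| = |(fderiv ℝ f₀ w.1).det| := by
      have h6 : (fderiv ℝ ft₀ w.1).det =
          (Matrix.toEuclideanCLM (𝕜 := ℝ) Q : E p →L[ℝ] E p).det * (fderiv ℝ f₀ w.1).det := by
        rw [h4]; exact LinearMap.det_comp _ _
      rw [h6, abs_mul, hdet, one_mul]
    rw [h5, h0, h1, SVAR.mulVecE_eq, SVAR.mulVecE_eq, ← map_sub, ← SVAR.mulVecE_eq, hρt]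
end
end
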